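/- Let q be real with 0 < q < 1, let r ≥ 1 be an integer, let ω_1, …, ω_r be positive reals, let s ∈ ℂ, let t ∈ ℂ with Re(t) > r − 1, and let z ∈ ℂ with Re(z) > 0. Then ζ_{q,r}(s,t,z;ω) = (1−q)^s · ∑_{l=0}^{∞} ((s)_l / l!) · q^{lz} · ∏_{j=1}^{r} (1 − q^{ω_j(t−j+1+l)})^{−1}, where (s)_l := s(s+1)⋯(s+l−1) is the ascending Pochhammer symbol, each factor 1 − q^{ω_j(t−j+1+l)} is nonzero, and the series on the right converges absolutely. -/

import Mathlib

/-!
Write `a_i = q^{ω_i (t - i)}`, `y_n = q^{n·ω + z}` and `c_l = (s)_l / l!`. Since `|q^w| = q^{Re w}`,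
all of `a_i`, `y_n` lie in the open unit disc, so the binomial series expands
`[n·ω + z]_q^{-s} = (1 - q)^s ∑_l c_l y_n^l` (`hasSum_ascPochhammer_mul_pow`, `one_div_qNum_cpow`).
The resulting double family `∏ a_i^{n_i} · c_l y_n^l` is dominated by
`∏ |a_i|^{n_i} · |c_l| |q^z|^l`, which is summable, so the two summations may be interchanged.
For fixed `l` the sum over `n` is a product of `r` geometric series with ratios
`a_i q^{ω_i l} = q^{ω_i (t - i + l)}` (`hasSum_pi_geometric`).
-/

open Complex

/-- `[w]_q = (1 - q^w)/(1 - q)` for real `0 < q < 1` and complex `w`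
(principal complex power of the positive real `q`). -/
noncomputable def qNum (q : ℝ) (w : ℂ) : ℂ := (1 - (q : ℂ) ^ w) / (1 - (q : ℂ))

/-- The `q`-analogue `ζ_{q,r}(s,t,z;ω)` of the Barnes multiple zeta function with
parameters `ω = (ω₁,…,ω_r)`: the sum over all `r`-tuples `(n₁,…,n_r)` of nonnegative
integers of `q^{n₁ω₁t + n₂ω₂(t−1) + ⋯ + n_rω_r(t−r+1)} / [n₁ω₁+⋯+n_rω_r+z]_q^s`. -/
noncomputable def zetaQOmega (q : ℝ) (r : ℕ) (ω : Fin r → ℝ) (s t z : ℂ) : ℂ :=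
  ∑' f : Fin r → ℕ,
    (q : ℂ) ^ (∑ i : Fin r, (f i : ℂ) * (ω i : ℂ) * (t - (i : ℕ)))
      / (qNum q (((∑ i : Fin r, (f i : ℝ) * ω i : ℝ) : ℂ) + z)) ^ s

lemma ring_choose_eq_ascPochhammer_div (s : ℂ) (n : ℕ) :
    Ring.choose (s + n - 1) n = (ascPochhammer ℂ n).eval s / (n.factorial : ℂ) := by
  have h := Ring.factorial_nsmul_multichoose_eq_ascPochhammer s n
  rw [Polynomial.ascPochhammer_smeval_eq_eval] at h
  rw [eq_div_iff (by exact_mod_cast n.factorial_ne_zero), ← h, Ring.choose, nsmul_eq_mul, mul_comm]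
  congr 2
  ring

lemma summable_norm_ascPochhammer_mul_pow (s : ℂ) {x : ℂ} (hx : ‖x‖ < 1) :
    Summable fun l : ℕ => ‖((ascPochhammer ℂ l).eval s / (l.factorial : ℂ)) * x ^ l‖ := by
  have h := one_div_one_sub_cpow_hasFPowerSeriesOnBall_zero s
  have hx' : x ∈ Metric.eball (0 : ℂ) 1 := by
    simpa [Metric.mem_eball, edist_zero_right, enorm_eq_nnnorm, ← NNReal.coe_lt_coe] using hx
  have := FormalMultilinearSeries.summable_norm_apply _ (Metric.eball_subset_eball h.r_le hx')
  simpa [FormalMultilinearSeries.ofScalars_apply_eq, ring_choose_eq_ascPochhammer_div,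
    mul_comm] using this

/-- The binomial series `(1 - x)^{-s} = ∑ (s)_l / l! · x^l` on the open unit disc. -/
lemma hasSum_ascPochhammer_mul_pow (s : ℂ) {x : ℂ} (hx : ‖x‖ < 1) :
    HasSum (fun l : ℕ => ((ascPochhammer ℂ l).eval s / (l.factorial : ℂ)) * x ^ l)
      (1 / (1 - x) ^ s) := by
  have h := one_div_one_sub_cpow_hasFPowerSeriesOnBall_zero s
  have hx' : x ∈ Metric.eball (0 : ℂ) 1 := by
    simpa [Metric.mem_eball, edist_zero_right, enorm_eq_nnnorm, ← NNReal.coe_lt_coe] using hx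
  have := h.hasSum hx'
  simpa [FormalMultilinearSeries.ofScalars_apply_eq, ring_choose_eq_ascPochhammer_div,
    mul_comm] using this

/-- The product of `r` geometric series, as an absolutely convergent sum over `ℕ^r`. -/
lemma hasSum_pi_geometric : ∀ (r : ℕ) (x : Fin r → ℂ), (∀ i, ‖x i‖ < 1) →
    Summable (fun f : Fin r → ℕ => ‖∏ i, x i ^ f i‖) ∧
      HasSum (fun f : Fin r → ℕ => ∏ i, x i ^ f i) (∏ i, (1 - x i)⁻¹)
  | 0, x, _ => by
    refine ⟨.of_finite, ?_⟩
    simp [hasSum_unique]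
  | r + 1, x, hx => by
    obtain ⟨h1, h2⟩ := hasSum_pi_geometric r (fun i => x i.succ) (fun i => hx _)
    have g1 : Summable fun n : ℕ => ‖x 0 ^ n‖ := by
      simpa using summable_geometric_of_lt_one (norm_nonneg _) (hx 0)
    have g2 := hasSum_geometric_of_norm_lt_one (hx 0)
    constructor
    · rw [← (Fin.consEquiv fun _ : Fin (r + 1) => ℕ).summable_iff]
      refine (Summable.mul_norm (f := fun n : ℕ => x 0 ^ n)
        (g := fun f : Fin r → ℕ => ∏ i, x i.succ ^ f i) g1 h1).congr fun p => ?_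
      simp [Fin.consEquiv, Fin.prod_univ_succ]
    · rw [← (Fin.consEquiv fun _ : Fin (r + 1) => ℕ).hasSum_iff]
      have := g2.mul h2 (summable_mul_of_summable_norm (f := fun n : ℕ => x 0 ^ n)
        (g := fun f : Fin r → ℕ => ∏ i, x i.succ ^ f i) g1 h1)
      rw [Fin.prod_univ_succ]
      refine this.congr_fun fun p => ?_
      simp [Fin.consEquiv, Fin.prod_univ_succ]

lemma norm_ofReal_cpow_lt_one {q : ℝ} (hq0 : 0 < q) (hq1 : q < 1) {w : ℂ} (hw : 0 < w.re) :
    ‖(q : ℂ) ^ w‖ < 1 := by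
  rw [norm_cpow_eq_rpow_re_of_pos hq0]
  exact Real.rpow_lt_one hq0.le hq1 hw

/-- Dividing by the positive real `1 - q` does not change the argument, so the principal
`s`-th power splits without a branch correction. -/
lemma one_div_qNum_cpow {q : ℝ} (hq0 : 0 < q) (hq1 : q < 1) (s : ℂ) {w : ℂ} (hw : 0 < w.re) :
    1 / qNum q w ^ s = ((1 - q : ℝ) : ℂ) ^ s * (1 / (1 - (q : ℂ) ^ w) ^ s) := by
  have hq : 0 < 1 - q := by linarith
  have hne : 1 - (q : ℂ) ^ w ≠ 0 := by
    intro h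
    have := norm_ofReal_cpow_lt_one hq0 hq1 hw
    rw [← sub_eq_zero.1 h] at this
    simp at this
  have hq' : ((1 - q : ℝ) : ℂ) ≠ 0 := by exact_mod_cast hq.ne'
  have hqn : qNum q w = (((1 - q)⁻¹ : ℝ) : ℂ) * (1 - (q : ℂ) ^ w) := by
    simp [qNum, div_eq_inv_mul]
  rw [hqn, one_div, one_div, ← cpow_neg, ← cpow_neg,
    cpow_def_of_ne_zero (by rw [← hqn, qNum]; exact div_ne_zero hne (by exact_mod_cast hq')),
    cpow_def_of_ne_zero hne, cpow_def_of_ne_zero hq', ← Complex.exp_add,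
    log_ofReal_mul (inv_pos.2 hq) hne, Real.log_inv, ← ofReal_log hq.le]
  congr 1
  push_cast
  ring

/-- For `0 < q < 1`, `r ≥ 1`, positive reals `ω₁,…,ω_r`, `Re t > r − 1` and `Re z > 0`:
`ζ_{q,r}(s,t,z;ω) = (1−q)^s ∑_{l≥0} ((s)_l / l!) q^{lz} ∏_{j=1}^r (1 − q^{ω_j(t−j+1+l)})^{−1}`,
where `(s)_l` is the ascending Pochhammer symbol, each factor `1 − q^{ω_j(t−j+1+l)}` is
nonzero and the series on the right converges absolutely. -/
theorem zetaQOmega_eq_binomial_series (q : ℝ) (hq0 : 0 < q) (hq1 : q < 1) (r : ℕ)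
    (hr : 1 ≤ r) (ω : Fin r → ℝ) (hω : ∀ i, 0 < ω i) (s t z : ℂ)
    (ht : (r : ℝ) - 1 < t.re) (hz : 0 < z.re) :
    (∀ (i : Fin r) (l : ℕ), (1 : ℂ) - (q : ℂ) ^ ((ω i : ℂ) * (t - (i : ℕ) + l)) ≠ 0) ∧
    Summable (fun l : ℕ =>
      ‖((ascPochhammer ℂ l).eval s / (l.factorial : ℂ)) * (q : ℂ) ^ ((l : ℂ) * z) *
        ∏ i : Fin r, ((1 : ℂ) - (q : ℂ) ^ ((ω i : ℂ) * (t - (i : ℕ) + l)))⁻¹‖) ∧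
    zetaQOmega q r ω s t z
      = ((1 - q : ℝ) : ℂ) ^ s *
          ∑' l : ℕ, ((ascPochhammer ℂ l).eval s / (l.factorial : ℂ)) *
            (q : ℂ) ^ ((l : ℂ) * z) *
            ∏ i : Fin r, ((1 : ℂ) - (q : ℂ) ^ ((ω i : ℂ) * (t - (i : ℕ) + l)))⁻¹ := by
  have hq : (q : ℂ) ≠ 0 := by exact_mod_cast hq0.ne'
  have hti : ∀ i : Fin r, 0 < (t - (i : ℕ)).re := by
    intro i
    have : ((i : ℕ) : ℝ) + 1 ≤ r := by exact_mod_cast i.2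
    simp only [sub_re, natCast_re]
    linarith
  have hratio : ∀ (l : ℕ) (i : Fin r), ‖(q : ℂ) ^ ((ω i : ℂ) * (t - (i : ℕ) + l))‖ < 1 := by
    intro l i
    refine norm_ofReal_cpow_lt_one hq0 hq1 ?_
    rw [re_ofReal_mul, add_re, natCast_re]
    have := hti i
    have := hω i
    positivity
  set c : ℕ → ℂ := fun l => (ascPochhammer ℂ l).eval s / (l.factorial : ℂ) with hc
  set A : (Fin r → ℕ) → ℂ :=
    fun f => (q : ℂ) ^ (∑ i : Fin r, (f i : ℂ) * (ω i : ℂ) * (t - (i : ℕ))) with hA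
  set y : (Fin r → ℕ) → ℂ :=
    fun f => (q : ℂ) ^ (((∑ i : Fin r, (f i : ℝ) * ω i : ℝ) : ℂ) + z) with hy
  have hsum : ∀ f : Fin r → ℕ, 0 ≤ ∑ i : Fin r, (f i : ℝ) * ω i := fun f =>
    Finset.sum_nonneg fun i _ => mul_nonneg (Nat.cast_nonneg _) (hω i).le
  have hre : ∀ f : Fin r → ℕ, 0 < (((∑ i : Fin r, (f i : ℝ) * ω i : ℝ) : ℂ) + z).re := by
    intro f
    rw [add_re, ofReal_re]
    linarith [hsum f]
  have hgeo : ∀ (l : ℕ) (f : Fin r → ℕ), A f * (c l * y f ^ l) =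
      c l * (q : ℂ) ^ ((l : ℂ) * z) *
        ∏ i : Fin r, ((q : ℂ) ^ ((ω i : ℂ) * (t - (i : ℕ) + l))) ^ f i := by
    intro l f
    have hexp : A f * y f ^ l = (q : ℂ) ^ ((l : ℂ) * z) *
        ∏ i : Fin r, ((q : ℂ) ^ ((ω i : ℂ) * (t - (i : ℕ) + l))) ^ f i := by
      simp only [hA, hy, ← cpow_nat_mul]
      simp only [cpow_def_of_ne_zero hq, ← Complex.exp_add, ← Complex.exp_sum]
      congr 1
      push_cast
      simp only [← Finset.mul_sum, ← mul_add]
      congr 1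
      rw [mul_add, Finset.mul_sum, ← add_assoc, ← Finset.sum_add_distrib, add_comm]
      congr 1
      exact Finset.sum_congr rfl fun i _ => by ring
    rw [mul_left_comm, hexp, mul_assoc]
  have hAsum : Summable fun f => ‖A f‖ := by
    refine (hasSum_pi_geometric r _ (hratio 0)).1.congr fun f => ?_
    have h := hgeo 0 f
    simp only [hc, pow_zero, ascPochhammer_zero, Polynomial.eval_one, Nat.factorial_zero,
      Nat.cast_one, div_one, mul_one, Nat.cast_zero, zero_mul, cpow_zero, one_mul] at h
    simp only [Nat.cast_zero, h]
  -- the domination uses `‖y f‖ ≤ ‖q ^ z‖`, uniformly in `f`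
  have hF : Summable fun p : (Fin r → ℕ) × ℕ => ‖A p.1 * (c p.2 * y p.1 ^ p.2)‖ := by
    have hdom := Summable.mul_norm (f := A) (g := fun l => c l * ((q : ℂ) ^ z) ^ l) hAsum
      (summable_norm_ascPochhammer_mul_pow s (norm_ofReal_cpow_lt_one hq0 hq1 hz))
    refine Summable.of_nonneg_of_le (fun _ => norm_nonneg _) (fun p => ?_) hdom
    simp only [norm_mul, norm_pow]
    gcongr
    simp only [hy, norm_cpow_eq_rpow_re_of_pos hq0]
    refine Real.rpow_le_rpow_of_exponent_ge hq0 hq1.le ?_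
    rw [add_re, ofReal_re]
    linarith [hsum p.1]
  have hinner : ∀ l : ℕ, HasSum (fun f => A f * (c l * y f ^ l))
      (c l * (q : ℂ) ^ ((l : ℂ) * z) *
        ∏ i : Fin r, ((1 : ℂ) - (q : ℂ) ^ ((ω i : ℂ) * (t - (i : ℕ) + l)))⁻¹) := by
    intro l
    simp only [hgeo l]
    exact (hasSum_pi_geometric r _ (hratio l)).2.mul_left _
  refine ⟨fun i l h => ?_, ?_, ?_⟩
  · have := hratio l i
    rw [← sub_eq_zero.1 h] at this
    simp at this
  · have hF' := (Equiv.prodComm ℕ (Fin r → ℕ)).summable_iff.2 hF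
    refine Summable.of_nonneg_of_le (fun _ => norm_nonneg _) (fun l => ?_) hF'.prod
    rw [← (hinner l).tsum_eq]
    exact norm_tsum_le_tsum_norm (hF'.prod_factor l)
  · calc zetaQOmega q r ω s t z
        = ∑' f, ((1 - q : ℝ) : ℂ) ^ s * ∑' l, A f * (c l * y f ^ l) := by
          refine tsum_congr fun f => ?_
          rw [tsum_mul_left, (hasSum_ascPochhammer_mul_pow s
            (norm_ofReal_cpow_lt_one hq0 hq1 (hre f))).tsum_eq, mul_left_comm,
            ← one_div_qNum_cpow hq0 hq1 s (hre f), mul_one_div]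
      _ = ((1 - q : ℝ) : ℂ) ^ s * ∑' l, ∑' f, A f * (c l * y f ^ l) := by
          rw [tsum_mul_left]
          congr 1
          exact Summable.tsum_comm (f := fun l f => A f * (c l * y f ^ l))
            ((Equiv.prodComm ℕ (Fin r → ℕ)).summable_iff.2 hF.of_norm)
      _ = _ := by rw [tsum_congr fun l => (hinner l).tsum_eq]
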